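/- Let (a₁,b₁), (a₂,b₂), (a₃,b₃) ∈ ℝ² with b₁ ≠ 0, b₂ ≠ 0, b₃ ≠ 0 and a₁ ≠ 0, and assume it is NOT the case that simultaneously a₁·b₂ = a₂·b₁, b₂ = b₃, and a₃ = a₂ + a₂/a₁ − 1. Then there exists a nonzero real polynomial f in two variables of total degree at most 2 such that f(x,y) = 0 for every point (x,y) ∈ ℝ² with y ∉ {0, 1/2, 1} having the property that the three lines — the line through (x/(1−2y), 0) and (a₁,b₁), the line through (x/(1−y), 0) and (a₂,b₂), and the line through ((x−y)/(1−y), 0) and (a₃,b₃) — have a common point. -/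

import Mathlib

/-!
The line through `(u, 0)` and `(a, b)` has equation `b X + (u - a) Y = b u`.  Substituting the
values of `u`, `t`, `s` and clearing denominators, concurrency of the three lines forces the
vanishing of the determinant with rows
`(b₁(1-2y), x - a₁(1-2y), -b₁x)`, `(b₂(1-y), x - a₂(1-y), -b₂x)`,
`(b₃(1-y), x - y - a₃(1-y), -b₃(x-y))`.
Adding `x` times the first column to the third makes the third column divisible by `y`; the
quotient of the determinant by `y` is a polynomial whose cubic part vanishes, since the leading
parts of its outer columns are proportional.  This is the quadric `f`.  Its constant, `x²` and
`x` coefficients vanish simultaneously exactly in the excluded degenerate case, so `f ≠ 0`.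
-/

/-- Points of the Euclidean plane. -/
abbrev Pt : Type := ℝ × ℝ

open MvPolynomial in
/-- The polynomial `c + p x + q y + l x² + m x y + n y²`. -/
noncomputable def quadric (c p q l m n : ℝ) : MvPolynomial (Fin 2) ℝ :=
  C c + C p * X 0 + C q * X 1 + C l * (X 0 * X 0) + C m * (X 0 * X 1) + C n * (X 1 * X 1)

lemma eval_quadric (c p q l m n x y : ℝ) :
    MvPolynomial.eval ![x, y] (quadric c p q l m n) =
      c + p * x + q * y + l * (x * x) + m * (x * y) + n * (y * y) := by
  simp [quadric]

lemma totalDegree_quadric_le (c p q l m n : ℝ) :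
    (quadric c p q l m n).totalDegree ≤ 2 := by
  have hC (a : ℝ) (g : MvPolynomial (Fin 2) ℝ) (hg : g.totalDegree ≤ 2) :
      (MvPolynomial.C a * g).totalDegree ≤ 2 := by
    refine (MvPolynomial.totalDegree_mul _ _).trans ?_
    simpa using hg
  have hX (i j : Fin 2) :
      (MvPolynomial.X i * MvPolynomial.X j : MvPolynomial (Fin 2) ℝ).totalDegree ≤ 2 := by
    refine (MvPolynomial.totalDegree_mul _ _).trans ?_
    simp
  have hX1 (i : Fin 2) : (MvPolynomial.X i : MvPolynomial (Fin 2) ℝ).totalDegree ≤ 2 := by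
    simp
  have hadd (g h : MvPolynomial (Fin 2) ℝ) (hg : g.totalDegree ≤ 2) (hh : h.totalDegree ≤ 2) :
      (g + h).totalDegree ≤ 2 :=
    (MvPolynomial.totalDegree_add _ _).trans (max_le hg hh)
  unfold quadric
  refine hadd _ _ (hadd _ _ (hadd _ _ (hadd _ _ (hadd _ _ ?_ ?_) ?_) ?_) ?_) ?_
  · simp
  · exact hC _ _ (hX1 0)
  · exact hC _ _ (hX1 1)
  · exact hC _ _ (hX 0 0)
  · exact hC _ _ (hX 0 1)
  · exact hC _ _ (hX 1 1)

/-- The equation of the line through `(w / d, 0)` and `(a, b)`, with the denominator `d` cleared. -/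
lemma line_equation {w d a b : ℝ} (hd : d ≠ 0) {z : Pt}
    (hz : z ∈ affineSpan ℝ ({(w / d, 0), (a, b)} : Set Pt)) :
    b * d * z.1 + (w - a * d) * z.2 = b * w := by
  obtain ⟨r, rfl⟩ := mem_affineSpan_pair_iff_exists_lineMap_eq.1 hz
  simp [AffineMap.lineMap_apply]
  field_simp
  ring

/-- Let `(a₁,b₁), (a₂,b₂), (a₃,b₃)` be points with nonzero second
coordinates and `a₁ ≠ 0`, not satisfying the degenerate conditions `a₁ b₂ = a₂ b₁`,
`b₂ = b₃`, `a₃ = a₂ + a₂/a₁ − 1` simultaneously.  Then there is a nonzero polynomial of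
total degree at most `2` vanishing at every `(x, y)` with `y ∉ {0, 1/2, 1}` for which the
lines through `(x/(1−2y), 0)` and `(a₁,b₁)`, through `(x/(1−y), 0)` and `(a₂,b₂)`, and
through `((x−y)/(1−y), 0)` and `(a₃,b₃)` are concurrent. -/
theorem statement15 (a₁ b₁ a₂ b₂ a₃ b₃ : ℝ)
    (hb₁ : b₁ ≠ 0) (hb₂ : b₂ ≠ 0) (hb₃ : b₃ ≠ 0) (ha₁ : a₁ ≠ 0)
    (hdeg : ¬(a₁ * b₂ = a₂ * b₁ ∧ b₂ = b₃ ∧ a₃ = a₂ + a₂ / a₁ - 1)) :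
    ∃ f : MvPolynomial (Fin 2) ℝ, f ≠ 0 ∧ f.totalDegree ≤ 2 ∧
      ∀ x y : ℝ, y ≠ 0 → y ≠ 1 / 2 → y ≠ 1 →
        (∃ z : Pt,
          z ∈ affineSpan ℝ ({(x / (1 - 2 * y), 0), (a₁, b₁)} : Set Pt) ∧
          z ∈ affineSpan ℝ ({(x / (1 - y), 0), (a₂, b₂)} : Set Pt) ∧
          z ∈ affineSpan ℝ ({((x - y) / (1 - y), 0), (a₃, b₃)} : Set Pt)) →
        MvPolynomial.eval ![x, y] f = 0 := by
  refine ⟨quadric (-(b₃ * (b₁ * a₂ - b₂ * a₁)))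
    (b₃ * (b₁ - b₂) + b₁ * (b₂ * a₃ - a₂ * b₃))
    (b₃ * (b₁ * a₂ - b₂ * (2 * a₁)) + b₃ * (2 * b₁ * a₂ - b₂ * a₁))
    (-(b₁ * (b₂ - b₃)))
    (-(b₁ * (b₂ * (a₃ - 1) - a₂ * b₃)) - b₃ * (2 * b₁ - b₂))
    (-(b₃ * (2 * b₁ * a₂ - 2 * a₁ * b₂))), ?_, totalDegree_quadric_le _ _ _ _ _ _, ?_⟩
  · intro h0
    -- The values at `(0, 0)`, `(1, 0)`, `(-1, 0)` determine the coefficients of `1`, `x`, `x²`.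
    have e (x : ℝ) := (eval_quadric _ _ _ _ _ _ x 0).symm.trans
      ((congrArg (MvPolynomial.eval ![x, 0]) h0).trans (map_zero _))
    have e0 := e 0
    have e1 := e 1
    have e2 := e (-1)
    have h1 : a₁ * b₂ = a₂ * b₁ := by
      apply mul_left_cancel₀ hb₃
      linear_combination e0
    have h2 : b₂ = b₃ := by
      apply mul_left_cancel₀ hb₁
      linear_combination e0 - (e1 + e2) / 2
    subst h2
    refine hdeg ⟨h1, rfl, ?_⟩
    have h3 : b₁ - b₂ + b₁ * (a₃ - a₂) = 0 := by
      apply mul_left_cancel₀ hb₂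
      linear_combination (e1 - e2) / 2
    field_simp
    apply mul_left_cancel₀ hb₁
    linear_combination a₁ * h3 + h1
  · rintro x y hy hy2 hy1 ⟨z, hz1, hz2, hz3⟩
    have hd1 : 1 - 2 * y ≠ 0 := fun h => hy2 (by linarith)
    have hd2 : 1 - y ≠ 0 := fun h => hy1 (by linarith)
    have l1 := line_equation hd1 hz1
    have l2 := line_equation hd2 hz2
    have l3 := line_equation hd2 hz3
    rw [eval_quadric]
    apply mul_left_cancel₀ hy
    -- The multipliers are the cofactors of the third column of the determinant: the vector
    -- `(z.1, z.2, 1)` lies in the kernel of the matrix.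
    linear_combination
      (b₂ * (1 - y) * (x - y - a₃ * (1 - y)) - b₃ * (1 - y) * (x - a₂ * (1 - y))) * l1
      - (b₁ * (1 - 2 * y) * (x - y - a₃ * (1 - y))
          - b₃ * (1 - y) * (x - a₁ * (1 - 2 * y))) * l2
      + (b₁ * (1 - 2 * y) * (x - a₂ * (1 - y)) - b₂ * (1 - y) * (x - a₁ * (1 - 2 * y))) * l3
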